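/- Let G be a path graph on vertices p_1, ..., p_n (or a cycle), and let I, I', I_t be independent sets of G such that G[I △ I'] is connected and nonempty. Then cc(I' △ I_t) ≥ cc(I △ I_t) − 1, where cc(S) denotes the number of connected components of G[S]. -/

import Mathlib

/-- A set of vertices is independent: no two of its vertices are adjacent. -/
def IsIndep {V : Type*} (G : SimpleGraph V) (I : Set V) : Prop :=
  ∀ ⦃a⦄, a ∈ I → ∀ ⦃b⦄, b ∈ I → ¬ G.Adj a b

/-- The number of connected components of the subgraph induced by `S`. -/
noncomputable def cc {V : Type*} (G : SimpleGraph V) (S : Set V) : ℕ :=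
  Nat.card (G.induce S).ConnectedComponent

open SimpleGraph

/-- The elements of `S` whose cyclic successor lies outside `S`. -/
def cyclicEnds {n : ℕ} (S : Set (Fin (n + 1))) : Set (Fin (n + 1)) :=
  {i | i ∈ S ∧ i + 1 ∉ S}

theorem cycleGraph_adj_iff_add_one {n : ℕ} {a b : Fin (n + 1)} :
    (cycleGraph (n + 1)).Adj a b ↔ a ≠ b ∧ (a = b + 1 ∨ b = a + 1) := by
  simp [cycleGraph_eq_circulantGraph, sub_eq_iff_eq_add, add_comm]

theorem reachable_add_one {n : ℕ} {S : Set (Fin (n + 1))} {i : Fin (n + 1)}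
    (hi : i ∈ S) (hi' : i + 1 ∈ S) :
    ((cycleGraph (n + 1)).induce S).Reachable ⟨i, hi⟩ ⟨i + 1, hi'⟩ := by
  by_cases h : i = i + 1
  · rw [show (⟨i, hi⟩ : S) = ⟨i + 1, hi'⟩ from Subtype.ext h]
  · exact Adj.reachable (cycleGraph_adj_iff_add_one.2 ⟨h, Or.inr rfl⟩)

/-- Everything reachable from an end of `S` is reached by stepping backwards inside `S`. -/
theorem exists_backward_run_of_reachable {n : ℕ} {S : Set (Fin (n + 1))} {i j : S}
    (hi : i.1 + 1 ∉ S) (h : ((cycleGraph (n + 1)).induce S).Reachable i j) :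
    ∃ k : ℕ, j.1 + k • 1 = i.1 ∧ ∀ m ≤ k, j.1 + m • 1 ∈ S := by
  rw [reachable_iff_reflTransGen] at h
  induction h with
  | refl => exact ⟨0, by simp, fun m hm => by simp [Nat.le_zero.1 hm]⟩
  | @tail b c _ hbc ih =>
    obtain ⟨k, hk, hS⟩ := ih
    rcases (cycleGraph_adj_iff_add_one.1 hbc).2 with e | e
    · refine ⟨k + 1, ?_, fun m hm => ?_⟩
      · change b.1 = c.1 + 1 at e
        rw [← hk, e, succ_nsmul']
        abel
      · change b.1 = c.1 + 1 at e
        cases m with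
        | zero => simp
        | succ m =>
          have := hS m (by lia)
          rwa [e, add_assoc, ← succ_nsmul'] at this
    · change c.1 = b.1 + 1 at e
      cases k with
      | zero =>
        rw [zero_nsmul, add_zero] at hk
        exact absurd (e ▸ c.2) (hk ▸ hi)
      | succ k =>
        refine ⟨k, by rw [e, add_assoc, ← succ_nsmul', hk], fun m hm => ?_⟩
        rw [e, add_assoc, ← succ_nsmul']
        exact hS (m + 1) (by lia)

theorem ncard_cyclicEnds_le_cc {n : ℕ} (S : Set (Fin (n + 1))) :
    (cyclicEnds S).ncard ≤ cc (cycleGraph (n + 1)) S := by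
  rw [← Nat.card_coe_set_eq]
  refine Nat.card_le_card_of_injective
    (fun i : cyclicEnds S => ((cycleGraph (n + 1)).induce S).connectedComponentMk ⟨i.1, i.2.1⟩) ?_
  intro i j hij
  obtain ⟨k, hk, hS⟩ := exists_backward_run_of_reachable i.2.2 (ConnectedComponent.eq.1 hij)
  cases k with
  | zero => exact Subtype.ext (by simpa using hk.symm)
  | succ k => exact absurd (by simpa using hS 1 (by lia)) j.2.2

theorem val_nsmul_one {n : ℕ} (x : Fin (n + 1)) : x.val • (1 : Fin (n + 1)) = x := by
  induction x using Fin.induction with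
  | zero => simp
  | succ i ih =>
    rw [Fin.val_castSucc] at ih
    rw [Fin.val_succ, succ_nsmul, ih, Fin.coeSucc_eq_succ]

theorem cc_le_ncard_cyclicEnds {n : ℕ} {S : Set (Fin (n + 1))} (hS : S ≠ Set.univ) :
    cc (cycleGraph (n + 1)) S ≤ (cyclicEnds S).ncard := by
  rw [← Nat.card_coe_set_eq]
  refine Nat.card_le_card_of_surjective
    (fun i : cyclicEnds S => ((cycleGraph (n + 1)).induce S).connectedComponentMk ⟨i.1, i.2.1⟩) ?_
  intro c
  induction c using ConnectedComponent.ind with | _ j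
  by_contra hc
  have run (k : ℕ) : ∃ h : j.1 + k • 1 ∈ S,
      ((cycleGraph (n + 1)).induce S).Reachable j ⟨j.1 + k • 1, h⟩ := by
    induction k with
    | zero => exact ⟨by simp, by simp⟩
    | succ k ih =>
      obtain ⟨h, hr⟩ := ih
      have h' : j.1 + k • 1 + 1 ∈ S := by
        by_contra hn
        exact hc ⟨⟨_, h, hn⟩, ConnectedComponent.sound hr.symm⟩
      have := hr.trans (reachable_add_one h h')
      simp only [succ_nsmul, ← add_assoc]
      exact ⟨h', this⟩
  refine hS (Set.eq_univ_of_forall fun x => ?_)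
  obtain ⟨h, -⟩ := run (x - j.1).val
  rwa [val_nsmul_one, add_sub_cancel] at h

open Classical in
/-- Going once around the cycle, one leaves `S` as often as one enters it. -/
theorem two_mul_ncard_cyclicEnds {n : ℕ} (S : Set (Fin (n + 1))) :
    2 * (cyclicEnds S).ncard =
      (Finset.univ.filter fun i => ¬ (i ∈ S ↔ i + 1 ∈ S)).card := by
  have hsum : ∑ i, (if i + 1 ∈ S then 1 else 0) = ∑ i, if i ∈ S then 1 else 0 :=
    Equiv.sum_comp (Equiv.addRight 1) fun i => if i ∈ S then 1 else 0
  have hcard : (cyclicEnds S).ncard = ∑ i, if i ∈ S ∧ i + 1 ∉ S then 1 else 0 := by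
    rw [← Finset.card_filter, ← Set.ncard_coe_finset]
    simp [cyclicEnds]
  have key : 2 * (∑ i, if i ∈ S ∧ i + 1 ∉ S then 1 else 0) + ∑ i, (if i + 1 ∈ S then 1 else 0) =
      (∑ i, if ¬ (i ∈ S ↔ i + 1 ∈ S) then 1 else 0) + ∑ i, if i ∈ S then 1 else 0 := by
    rw [Finset.mul_sum, ← Finset.sum_add_distrib, ← Finset.sum_add_distrib]
    refine Finset.sum_congr rfl fun i _ => ?_
    by_cases h : i ∈ S <;> by_cases h' : i + 1 ∈ S <;> simp [h, h']
  rw [hcard, Finset.card_filter]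
  lia

theorem ncard_cyclicEnds_symmDiff_le {n : ℕ} (S T : Set (Fin (n + 1))) :
    (cyclicEnds (symmDiff S T)).ncard ≤ (cyclicEnds S).ncard + (cyclicEnds T).ncard := by
  classical
  suffices h : 2 * (cyclicEnds (symmDiff S T)).ncard ≤
      2 * (cyclicEnds S).ncard + 2 * (cyclicEnds T).ncard by lia
  simp only [two_mul_ncard_cyclicEnds]
  refine (Finset.card_le_card fun i => ?_).trans (Finset.card_union_le _ _)
  simp only [Finset.mem_filter, Finset.mem_union, Finset.mem_univ, true_and, Set.mem_symmDiff]
  tauto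

theorem cc_eq_one {V : Type*} {G : SimpleGraph V} {S : Set V} (h : (G.induce S).Connected) :
    cc G S = 1 :=
  Nat.card_eq_one_iff_unique.2 ⟨h.preconnected.subsingleton_connectedComponent,
    h.nonempty.map (G.induce S).connectedComponentMk⟩

theorem cc_cycleGraph_le_cc_symmDiff_add_one {n : ℕ} (A D : Set (Fin (n + 1)))
    (hD : ((cycleGraph (n + 1)).induce D).Connected) :
    cc (cycleGraph (n + 1)) A ≤ cc (cycleGraph (n + 1)) (symmDiff A D) + 1 := by
  by_cases hA : A = Set.univ
  · subst hA
    rw [cc_eq_one ((induceUnivIso _).connected_iff.2 cycleGraph_connected)]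
    lia
  · calc cc (cycleGraph (n + 1)) A
      _ ≤ (cyclicEnds A).ncard := cc_le_ncard_cyclicEnds hA
      _ = (cyclicEnds (symmDiff (symmDiff A D) D)).ncard := by rw [symmDiff_symmDiff_cancel_right]
      _ ≤ (cyclicEnds (symmDiff A D)).ncard + (cyclicEnds D).ncard :=
        ncard_cyclicEnds_symmDiff_le _ _
      _ ≤ cc (cycleGraph (n + 1)) (symmDiff A D) + cc (cycleGraph (n + 1)) D :=
        add_le_add (ncard_cyclicEnds_le_cc _) (ncard_cyclicEnds_le_cc _)
      _ = _ := by rw [cc_eq_one hD]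

/-- The path on `n` vertices is the cycle on `n + 1` vertices with the last vertex removed. -/
def pathGraphEmbeddingCycleGraph (n : ℕ) : pathGraph n ↪g cycleGraph (n + 1) where
  toEmbedding := Fin.castSuccEmb
  map_rel_iff' {a b} := by
    simp only [cycleGraph_adj_iff_add_one, pathGraph_adj, Fin.coe_castSuccEmb, ne_eq,
      ← Fin.val_inj, Fin.coeSucc_eq_succ, Fin.val_succ, Fin.val_castSucc]
    lia

/-- An embedding restricts to an isomorphism from an induced subgraph onto its image. -/
noncomputable def induceIsoImage {V W : Type*} {G : SimpleGraph V} {H : SimpleGraph W}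
    (e : G ↪g H) (S : Set V) : G.induce S ≃g H.induce (e '' S) where
  toEquiv := Equiv.Set.image e S e.injective
  map_rel_iff' := by simp

theorem cc_image {V W : Type*} {G : SimpleGraph V} {H : SimpleGraph W} (e : G ↪g H) (S : Set V) :
    cc H (e '' S) = cc G S :=
  Nat.card_congr (induceIsoImage e S).connectedComponentEquiv.symm

theorem cc_pathGraph_le_cc_symmDiff_add_one {n : ℕ} (A D : Set (Fin n))
    (hD : ((pathGraph n).induce D).Connected) :
    cc (pathGraph n) A ≤ cc (pathGraph n) (symmDiff A D) + 1 := by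
  let e := pathGraphEmbeddingCycleGraph n
  have h := cc_cycleGraph_le_cc_symmDiff_add_one (e '' A) (e '' D)
    ((induceIsoImage e D).connected_iff.1 hD)
  rwa [← Set.image_symmDiff e.injective, cc_image, cc_image] at h

/-- On a path or a cycle, a single flip (a step to an adjacent independent set) decreases
the number of connected components of the symmetric difference with the target by at
most one: `cc(I' ∆ I_t) ≥ cc(I ∆ I_t) - 1`. -/
theorem stmt_8 {n : ℕ} (G : SimpleGraph (Fin n))
    (hG : G = SimpleGraph.pathGraph n ∨ G = SimpleGraph.cycleGraph n)
    (I I' I_t : Set (Fin n))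
    (hI : IsIndep G I) (hI' : IsIndep G I') (hIt : IsIndep G I_t)
    (hconn : (G.induce (symmDiff I I')).Connected) :
    cc G (symmDiff I I_t) ≤ cc G (symmDiff I' I_t) + 1 := by
  have hsymm : symmDiff (symmDiff I I_t) (symmDiff I I') = symmDiff I' I_t := by
    rw [symmDiff_comm I I_t, symmDiff_assoc, symmDiff_symmDiff_cancel_left, symmDiff_comm]
  rw [← hsymm]
  rcases hG with rfl | rfl
  · exact cc_pathGraph_le_cc_symmDiff_add_one _ _ hconn
  · cases n with
    | zero => exact hconn.nonempty.some.1.elim0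
    | succ n => exact cc_cycleGraph_le_cc_symmDiff_add_one _ _ hconn
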